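/- Let G = ℤ/2 × ℤ/2 = {0,a,b,c}, where a,b,c denote the three nonzero elements, so n = 4 and d = 2+√5. A triple (ε,η,A) is a solution of the polynomial equations for G if and only if η_g = 1 for all g and there exist s ∈ {1,−1} and z ∈ {√d, −√d, i·√d, −i·√d} such that ε_h(g) = χ(h,g), where χ is given (rows indexed by h, columns by g, in the order 0,a,b,c) by the matrix [[1,1,1,1],[1,−1,s,−s],[1,−s,−1,s],[1,s,−s,−1]], and A_0, A_a, A_b, A_c are (1/(d−1)) times the matrices (rows h, columns k, order 0,a,b,c): A_0 = [[d−2,−1,−1,−1],[−1,−1,z,conj(z)],[−1,conj(z),−1,z],[−1,z,conj(z),−1]]; A_a = [[d−2,−1,−1,−1],[−1,1,s·z,−s·conj(z)],[−1,s·conj(z),s,−z],[−1,−s·z,−conj(z),−s]]; A_b = [[d−2,−1,−1,−1],[−1,−s,−s·z,−conj(z)],[−1,−s·conj(z),1,s·z],[−1,−z,s·conj(z),s]]; A_c = [[d−2,−1,−1,−1],[−1,s,−z,s·conj(z)],[−1,−conj(z),−s,−s·z],[−1,s·z,−s·conj(z),1]]. Moreover, under gauge transformations and the action of the automorphism group of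 G, this solution set decomposes into exactly two orbits: the solutions with z ∈ {√d,−√d} and the solutions with z ∈ {i·√d,−i·√d}. -/

import Mathlib

open scoped BigOperators
open Complex

/-- `d = (n + √(n²+4))/2` where `n` is the cardinality of `G`. -/
noncomputable def dR (G : Type) [Fintype G] : ℝ :=
  ((Fintype.card G : ℝ) + Real.sqrt ((Fintype.card G : ℝ) ^ 2 + 4)) / 2

/-- The complex number `d`. -/
noncomputable def dC (G : Type) [Fintype G] : ℂ := ((dR G : ℝ) : ℂ)

/-- Equation (9) of the polynomial equations, at fixed parameters `g p q x y`. -/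
def Eq9At {G : Type} [AddCommGroup G] [Fintype G] [DecidableEq G]
    (ε : G → G → ℂ) (η : G → ℂ) (A : G → G → G → ℂ) (g p q x y : G) : Prop :=
  ∑ l : G, A g (x + y) l * A (g - p + x) (-x) (l + p) * A (g - q + x + y) (-y) (l + q)
    = η g * η (g + q + x) * η (g + p + q + y) *
        (starRingEnd ℂ) (η (g + p)) * (starRingEnd ℂ) (η (g + x + y)) *
        (starRingEnd ℂ) (η (g + q + x + y)) *
        ε p (g - p + x) * ε (p + x) (g - p + q + y) *
        ε q (g - q + x + y) * ε (q + y) (g - q + x) *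
        A g (p + x) (q + x + y) * A (g - p) (q + y) (p + x + y)
      - (if x = (0 : G) then (1 : ℂ) else 0) * (if y = (0 : G) then (1 : ℂ) else 0) *
        η g * η (g + p) * η (g + q) / dC G

/-- Equations (1)–(8) of the polynomial equations for `(ε, η, A)` on a finite abelian
group `G` (with `ε` taking values in `{1, −1}`). -/
structure PolyEqs1to8 {G : Type} [AddCommGroup G] [Fintype G] [DecidableEq G]
    (ε : G → G → ℂ) (η : G → ℂ) (A : G → G → G → ℂ) : Prop where
  eps_pm : ∀ h g : G, ε h g = 1 ∨ ε h g = -1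
  eq1 : ∀ g h k : G, ε (h + k) g = ε h g * ε k (g + h + h)
  eq1' : ∀ h : G, ε h 0 = 1
  eq2 : ∀ g h : G, η (g + h + h) = η g
  eq2' : ∀ g : G, η g ^ 3 = 1
  eq3 : ∀ g : G, ∑ h : G, A g h 0 = -(starRingEnd ℂ) (η g) / dC G
  eq4 : ∀ g g' k : G,
    ∑ h : G, A g (h - g) k * (starRingEnd ℂ) (A g' (h - g') k)
      = (if g = g' then (1 : ℂ) else 0)
        - (if k = (0 : G) then (1 : ℂ) else 0) * (starRingEnd ℂ) (η g) * η g' / dC G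
  eq5 : ∀ g h p q : G,
    A (g + h + h) p q = ε h g * ε h (g + p) * ε h (g + q) * ε h (g + p + q) * A g p q
  eq6 : ∀ g h k : G, A g k h = (starRingEnd ℂ) (A g h k)
  eq7a : ∀ g h k : G,
    A g h k = η g * ε (-k) (g + h) * ε (-k) (g + k) * ε (-k) (g + h + k) * A g (-k) (h - k)
  eq7b : ∀ g h k : G,
    A g h k = (starRingEnd ℂ) (η g) * ε (-h) (g + h) * ε (-h) (g + k) * ε (-h) (g + h + k) *
      A g (k - h) (-h)
  eq8a : ∀ g h k : G,
    A g h k = η g * η (g + k) * (starRingEnd ℂ) (η (g + h)) * (starRingEnd ℂ) (η (g + h + k)) *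
      ε h g * ε h (g + k) * A (g + h) h k
  eq8b : ∀ g h k : G,
    A g h k = (starRingEnd ℂ) (η g) * (starRingEnd ℂ) (η (g + h)) * η (g + k) * η (g + h + k) *
      ε k g * ε k (g + h) * A (g + k) h k

/-- A solution of the polynomial equations (1)–(9) for a finite abelian group `G`. -/
structure PolySolution {G : Type} [AddCommGroup G] [Fintype G] [DecidableEq G]
    (ε : G → G → ℂ) (η : G → ℂ) (A : G → G → G → ℂ)
    extends PolyEqs1to8 ε η A : Prop where
  eq9 : ∀ g p q x y : G, Eq9At ε η A g p q x y

/-- Equivalence of solutions under a gauge transformation combined with a group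
automorphism. -/
def EquivSol {G : Type} [AddCommGroup G] [Fintype G] [DecidableEq G]
    (ε : G → G → ℂ) (η : G → ℂ) (A : G → G → G → ℂ)
    (ε' : G → G → ℂ) (η' : G → ℂ) (A' : G → G → G → ℂ) : Prop :=
  ∃ (δ : G → ℂ) (θ : G ≃+ G),
    δ 0 = 1 ∧ (∀ g : G, δ g = 1 ∨ δ g = -1) ∧
    (∀ h g : G, ε' h g = δ g * δ (g + h + h) * ε (θ h) (θ g)) ∧
    (∀ g : G, η' g = η (θ g)) ∧
    (∀ g h k : G, A' g h k = δ g * δ (g + h) * δ (g + k) * δ (g + h + k) *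
      A (θ g) (θ h) (θ k))

/-- The Klein four-group `{0, a, b, c}`. -/
abbrev K4 : Type := ZMod 2 × ZMod 2

/-- The element `a` of the Klein four-group. -/
def aK : K4 := (1, 0)

/-- The element `b` of the Klein four-group. -/
def bK : K4 := (0, 1)

/-- The enumeration `0, a, b, c` of the Klein four-group as indices in `Fin 4`. -/
def idxK : K4 → Fin 4 := fun g =>
  if g = 0 then 0 else if g = aK then 1 else if g = bK then 2 else 3

/-- The character table `χ` (rows `h`, columns `g`, in the order `0, a, b, c`),
depending on the sign `s`. -/
noncomputable def chiMatK (s : ℂ) : Fin 4 → Fin 4 → ℂ :=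
  ![![1, 1, 1, 1], ![1, -1, s, -s], ![1, -s, -1, s], ![1, s, -s, -1]]

/-- The matrices `A_0, A_a, A_b, A_c` (rows `h`, columns `k`, in the order `0, a, b, c`) of
the solutions for the Klein four-group, before multiplication by `1/(d−1)`. -/
noncomputable def AmatK (s z : ℂ) : Fin 4 → Fin 4 → Fin 4 → ℂ :=
  ![![![dC K4 - 2, -1, -1, -1],
     ![-1, -1, z, star z],
     ![-1, star z, -1, z],
     ![-1, z, star z, -1]],
    ![![dC K4 - 2, -1, -1, -1],
     ![-1, 1, s * z, -(s * star z)],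
     ![-1, s * star z, s, -z],
     ![-1, -(s * z), -star z, -s]],
    ![![dC K4 - 2, -1, -1, -1],
     ![-1, -s, -(s * z), -star z],
     ![-1, -(s * star z), 1, s * z],
     ![-1, -z, s * star z, s]],
    ![![dC K4 - 2, -1, -1, -1],
     ![-1, s, -z, s * star z],
     ![-1, -star z, -s, -(s * z)],
     ![-1, s * z, -(s * star z), 1]]]

/-- The explicit `ε` of the solution for the Klein four-group with sign `s`. -/
noncomputable def epsK (s : ℂ) : K4 → K4 → ℂ := fun h g => chiMatK s (idxK h) (idxK g)

/-- The explicit `A` of the solution for the Klein four-group with parameters `s, z`. -/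
noncomputable def AfunK (s z : ℂ) : K4 → K4 → K4 → ℂ := fun g h k =>
  (1 / (dC K4 - 1)) * AmatK s z (idxK g) (idxK h) (idxK k)

/-!
Equations (3), (4) and (9) prescribe the moments `∑ r`, `∑ r ^ 2` and `∑ r ^ 3` of the real vector
`r k = η g * A g k 0`. On the Klein four-group the entries other than `r 0` have equal absolute
values, so `r = (d - 2, -1, -1, -1) / (d - 1)` and hence `η = 1`. Equation (5) then makes `ε` a
bicharacter, and the orthogonality relations (4) between columns of different `A g` force
`ε h h = ε h k * ε k h = -1` and `A 0 h k ^ 2 ∈ ℝ` for distinct nonzero `h`, `k`; every remaining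
entry is determined by `ε a b` and `A 0 a b`.

Conversely, up to the automorphism exchanging `a` and `b`, an explicit triple has `ε a b = 1`, and
its multiple `(d - 1) • A` is the image of a table over `ℤ[√5][z]` with `z ^ 2 = ± (2 + √5)`, where
the equations are decidable.

Gauge transformations and automorphisms preserve the square of `A 0 a b`, which is the same for all
ordered pairs of distinct nonzero elements.
-/

open scoped ComplexConjugate

/-! ### The moments of the zeroth column -/

section Constant

variable (G : Type) [Fintype G]

theorem dR_sq : dR G ^ 2 = Fintype.card G * dR G + 1 := by
  have hsqrt := Real.sq_sqrt (by positivity : 0 ≤ (Fintype.card G : ℝ) ^ 2 + 4)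
  unfold dR
  linear_combination hsqrt / 4

theorem dR_pos : 0 < dR G := by
  unfold dR
  positivity

theorem conj_dC : conj (dC G) = dC G :=
  Complex.conj_ofReal _

theorem dC_ne_zero : dC G ≠ 0 :=
  Complex.ofReal_ne_zero.2 (dR_pos G).ne'

end Constant

/-- The zeroth column of `A g`, normalised by `η g`, which makes it real. -/
noncomputable def zeroColumn {G : Type} [AddCommGroup G] (η : G → ℂ) (A : G → G → G → ℂ)
    (g k : G) : ℝ :=
  (η g * A g k 0).re

namespace PolyEqs1to8

variable {G : Type} [AddCommGroup G] [Fintype G] [DecidableEq G]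
  {ε : G → G → ℂ} {η : G → ℂ} {A : G → G → G → ℂ}

theorem eps_mul_self (h : PolyEqs1to8 ε η A) (k g : G) : ε k g * ε k g = 1 := by
  rcases h.eps_pm k g with hk | hk <;> simp [hk]

theorem conj_eps (h : PolyEqs1to8 ε η A) (k g : G) : conj (ε k g) = ε k g := by
  rcases h.eps_pm k g with hk | hk <;> simp [hk]

theorem eps_zero_left (h : PolyEqs1to8 ε η A) (g : G) : ε 0 g = 1 := by
  have hmul := h.eq1 g 0 0
  simp only [add_zero] at hmul
  rw [hmul, h.eps_mul_self]

theorem eta_mul_conj (h : PolyEqs1to8 ε η A) (g : G) : η g * conj (η g) = 1 := by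
  have hnorm := Complex.norm_eq_one_of_pow_eq_one (h.eq2' g) three_ne_zero
  rw [Complex.mul_conj', hnorm, Complex.ofReal_one, one_pow]

theorem conj_eta (h : PolyEqs1to8 ε η A) (g : G) : conj (η g) = η g ^ 2 := by
  linear_combination η g ^ 2 * h.eta_mul_conj g - conj (η g) * h.eq2' g

theorem A_zero_right (h : PolyEqs1to8 ε η A) (g k : G) : A g k 0 = η g * A g 0 k := by
  simpa [h.eps_zero_left] using h.eq7a g k 0

theorem coe_zeroColumn (h : PolyEqs1to8 ε η A) (g k : G) :
    (zeroColumn η A g k : ℂ) = η g * A g k 0 := by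
  refine Complex.conj_eq_iff_re.1 ?_
  rw [map_mul, ← h.eq6, h.A_zero_right, h.conj_eta]
  ring

theorem A_zero_left_eq (h : PolyEqs1to8 ε η A) (g k : G) :
    A g 0 k = η g * zeroColumn η A g k := by
  rw [h.coe_zeroColumn, h.A_zero_right]
  linear_combination -A g 0 k * h.eq2' g

theorem eta_mul_zeroColumn_zero (h : PolyEqs1to8 ε η A) (g : G) :
    η g * zeroColumn η A g 0 = zeroColumn η A g 0 := by
  rw [← h.A_zero_left_eq, h.coe_zeroColumn, ← h.A_zero_right]

theorem eta_eq_one_of_zeroColumn_ne_zero (h : PolyEqs1to8 ε η A) {g : G}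
    (hg : zeroColumn η A g 0 ≠ 0) : η g = 1 :=
  mul_right_cancel₀ (Complex.ofReal_ne_zero.2 hg) (by rw [h.eta_mul_zeroColumn_zero, one_mul])

theorem sum_zeroColumn (h : PolyEqs1to8 ε η A) (g : G) :
    ∑ k, zeroColumn η A g k = -1 / dR G := by
  have hsum : ∑ k, (zeroColumn η A g k : ℂ) = -1 / dC G := by
    simp only [h.coe_zeroColumn, ← Finset.mul_sum, h.eq3]
    linear_combination -h.eta_mul_conj g / dC G
  rw [dC] at hsum
  exact_mod_cast hsum

theorem sum_normSq (h : PolyEqs1to8 ε η A) (g k : G) :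
    ∑ l, Complex.normSq (A g l k) = 1 - (if k = 0 then 1 else 0) / dR G := by
  have hsum : ∑ l, A g l k * conj (A g l k) = _ :=
    ((Equiv.subRight g).sum_comp fun l ↦ A g l k * conj (A g l k)).symm.trans (h.eq4 g g k)
  rw [if_pos rfl, mul_assoc, mul_comm (conj _), h.eta_mul_conj, mul_one, dC] at hsum
  simp only [Complex.mul_conj] at hsum
  split_ifs at hsum ⊢ <;> exact_mod_cast hsum

theorem normSq_eta (h : PolyEqs1to8 ε η A) (g : G) : Complex.normSq (η g) = 1 := by
  rw [← Complex.ofReal_inj, ← Complex.mul_conj, h.eta_mul_conj, Complex.ofReal_one]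

theorem normSq_eps (h : PolyEqs1to8 ε η A) (k g : G) : Complex.normSq (ε k g) = 1 := by
  rcases h.eps_pm k g with hk | hk <;> simp [hk]

theorem normSq_A_symm (h : PolyEqs1to8 ε η A) (g k l : G) :
    Complex.normSq (A g k l) = Complex.normSq (A g l k) := by
  rw [h.eq6 g l k, Complex.normSq_conj]

theorem normSq_A_rotate (h : PolyEqs1to8 ε η A) (g k l : G) :
    Complex.normSq (A g k l) = Complex.normSq (A g (-l) (k - l)) := by
  rw [h.eq7a]
  simp [h.normSq_eta, h.normSq_eps]

theorem normSq_A_zero_left (h : PolyEqs1to8 ε η A) (g k : G) :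
    Complex.normSq (A g 0 k) = zeroColumn η A g k ^ 2 := by
  rw [h.A_zero_left_eq, Complex.normSq_mul, h.normSq_eta, Complex.normSq_ofReal, one_mul, sq]

theorem sum_zeroColumn_sq (h : PolyEqs1to8 ε η A) (g : G) :
    ∑ k, zeroColumn η A g k ^ 2 = 1 - 1 / dR G := by
  simp only [← h.normSq_A_zero_left, h.normSq_A_symm g 0]
  rw [h.sum_normSq, if_pos rfl]

end PolyEqs1to8

theorem PolySolution.sum_zeroColumn_cube {G : Type} [AddCommGroup G] [Fintype G] [DecidableEq G]
    {ε : G → G → ℂ} {η : G → ℂ} {A : G → G → G → ℂ} (h : PolySolution ε η A) (g : G) :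
    ∑ k, zeroColumn η A g k ^ 3 = zeroColumn η A g 0 ^ 2 - 1 / dR G := by
  have hη := h.eq2' g
  have heq9 := h.eq9 g 0 0 0 0
  simp only [Eq9At, add_zero, sub_zero, neg_zero, h.A_zero_left_eq, h.eps_zero_left, if_true,
    mul_one, h.conj_eta, h.eta_mul_zeroColumn_zero] at heq9
  have hsum : ∑ k, (zeroColumn η A g k : ℂ) ^ 3 = (zeroColumn η A g 0 : ℂ) ^ 2 - 1 / dC G := by
    calc ∑ k, (zeroColumn η A g k : ℂ) ^ 3
        = ∑ k, η g * zeroColumn η A g k * (η g * zeroColumn η A g k) *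
            (η g * zeroColumn η A g k) :=
          Finset.sum_congr rfl fun k _ ↦ by
            linear_combination -(zeroColumn η A g k : ℂ) ^ 3 * hη
      _ = (η g ^ 3) ^ 3 * (zeroColumn η A g 0 : ℂ) ^ 2 - η g ^ 3 / dC G := by rw [heq9]; ring
      _ = (zeroColumn η A g 0 : ℂ) ^ 2 - 1 / dC G := by rw [hη, one_pow, one_mul]
  rw [dC] at hsum
  exact_mod_cast hsum

/-! ### Uniqueness for the Klein four-group -/

theorem add_ne_zero_of_ne {G : Type*} [AddCommGroup G] [Module (ZMod 2) G] {g h : G}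
    (hgh : g ≠ h) : g + h ≠ 0 := by
  rwa [← ZModModule.sub_eq_add, sub_ne_zero]

section ExponentTwo

variable {G : Type} [AddCommGroup G] [Fintype G] [DecidableEq G] [Module (ZMod 2) G]
  {ε : G → G → ℂ} {η : G → ℂ} {A : G → G → G → ℂ}

theorem PolyEqs1to8.eps_add_left (h : PolyEqs1to8 ε η A) (k l g : G) :
    ε (k + l) g = ε k g * ε l g := by
  rw [h.eq1, add_assoc, ZModModule.add_self, add_zero]

theorem PolyEqs1to8.A_self_eq (h : PolyEqs1to8 ε η A) (g k : G) :
    A g k k = ε k g * zeroColumn η A g k := by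
  have hrot := h.eq7a g k k
  rw [add_assoc g k k] at hrot
  simp only [ZModModule.neg_eq_self, ZModModule.add_self, sub_self, add_zero] at hrot
  rw [hrot, h.coe_zeroColumn]
  linear_combination (η g * ε k g * A g k 0) * h.eps_mul_self k (g + k)

theorem PolyEqs1to8.normSq_A_add_left (h : PolyEqs1to8 ε η A) (g k l : G) :
    Complex.normSq (A g (k + l) l) = Complex.normSq (A g k l) := by
  rw [h.normSq_A_symm, h.normSq_A_rotate g k l, ZModModule.neg_eq_self, ZModModule.sub_eq_add]

theorem PolyEqs1to8.normSq_A_self (h : PolyEqs1to8 ε η A) (g k : G) :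
    Complex.normSq (A g k k) = zeroColumn η A g k ^ 2 := by
  rw [← h.normSq_A_zero_left, ← h.normSq_A_add_left g 0 k, zero_add]

end ExponentTwo

section PowerSums

variable {d r₀ r : ℝ}

theorem power_sums_of_three_equal (hd : d ^ 2 = 4 * d + 1) (hd4 : 4 < d)
    (h1 : r₀ + 3 * r = -1 / d) (h2 : r₀ ^ 2 + 3 * r ^ 2 = 1 - 1 / d)
    (h3 : r₀ ^ 3 + 3 * r ^ 3 = r₀ ^ 2 - 1 / d) :
    r₀ = (d - 2) / (d - 1) ∧ r = -1 / (d - 1) := by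
  have hinv : 1 / d = d - 4 := by field_simp; linarith
  rw [neg_div, hinv] at h1
  rw [hinv] at h2 h3
  obtain rfl : r₀ = -(d - 4) - 3 * r := by linarith
  have hroots : (4 * r + (d - 3)) * (4 * r + (d - 5)) = 0 := by
    linear_combination 4 / 3 * h2 - 1 / 3 * hd
  rcases mul_eq_zero.1 hroots with hr | hr
  · obtain rfl : r = -(d - 3) / 4 := by linarith
    constructor <;> field_simp [(by linarith : d - 1 ≠ 0)] <;> linarith
  · obtain rfl : r = (5 - d) / 4 := by linarith
    linarith [(by linear_combination h3 + 1 / 16 * (d - 7) * hd : -(3 / 4) * (d - 3) = 0)]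

theorem power_sums_ne_of_cancelling_pair (hd : d ^ 2 = 4 * d + 1) (hd4 : 4 < d)
    (h1 : r₀ + r = -1 / d) (h2 : r₀ ^ 2 + 3 * r ^ 2 = 1 - 1 / d) :
    r₀ ^ 3 + r ^ 3 ≠ r₀ ^ 2 - 1 / d := by
  intro h3
  have hinv : 1 / d = d - 4 := by field_simp; linarith
  rw [neg_div, hinv] at h1
  rw [hinv] at h2 h3
  obtain rfl : r₀ = -(d - 4) - r := by linarith
  have hquad : 4 * r ^ 2 + 2 * (d - 4) * r - 3 * (d - 4) = 0 := by linear_combination h2 - hd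
  have hlin : (d - 4) * (d - 3) * (4 * r + (d - 3)) = 0 := by
    linear_combination (-8 / 3) * (h3 + (3 * (d - 4) + 1) / 4 * hquad + 5 / 8 * (d - 4) * hd)
  have hcoeff : (d - 4) * (d - 3) ≠ 0 := mul_ne_zero (by linarith) (by linarith)
  obtain rfl : r = -(d - 3) / 4 := by linarith [(mul_eq_zero.1 hlin).resolve_left hcoeff]
  linarith [(by linear_combination hquad + 1 / 4 * hd : -2 * (d - 4) = 0)]

theorem power_sums_of_sq_eq {a b c : ℝ} (hd : d ^ 2 = 4 * d + 1) (hd4 : 4 < d)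
    (hb : b ^ 2 = a ^ 2) (hc : c ^ 2 = a ^ 2) (h1 : r₀ + a + b + c = -1 / d)
    (h2 : r₀ ^ 2 + a ^ 2 + b ^ 2 + c ^ 2 = 1 - 1 / d)
    (h3 : r₀ ^ 3 + a ^ 3 + b ^ 3 + c ^ 3 = r₀ ^ 2 - 1 / d) :
    r₀ = (d - 2) / (d - 1) ∧ a = -1 / (d - 1) := by
  rcases sq_eq_sq_iff_eq_or_eq_neg.1 hb with rfl | rfl <;>
    rcases sq_eq_sq_iff_eq_or_eq_neg.1 hc with rfl | rfl
  · exact power_sums_of_three_equal hd hd4 (by linarith) (by linarith) (by linarith)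
  · exact absurd (by linarith)
      (power_sums_ne_of_cancelling_pair (r₀ := r₀) (r := b) hd hd4 (by linarith) (by linarith))
  · exact absurd (by linarith)
      (power_sums_ne_of_cancelling_pair (r₀ := r₀) (r := c) hd hd4 (by linarith) (by linarith))
  · exact absurd (by linarith)
      (power_sums_ne_of_cancelling_pair (r₀ := r₀) (r := -a) hd hd4 (by linarith) (by linarith))

end PowerSums

theorem klein_four_cases {h k : K4} (hh : h ≠ 0) (hk : k ≠ 0) (hhk : h ≠ k) (l : K4) :
    l = 0 ∨ l = h ∨ l = k ∨ l = h + k := by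
  revert h k l
  decide

theorem klein_four_pair_induction {P : K4 → K4 → Prop} {h k : K4} (hh : h ≠ 0) (hk : k ≠ 0)
    (hhk : h ≠ k) (base : P h k) (swap : ∀ l m, P l m → P m l)
    (rotate : ∀ l m, P l m → P m (l + m)) {l m : K4} (hl : l ≠ 0) (hm : m ≠ 0) (hlm : l ≠ m) :
    P l m := by
  have hk_add : P k (h + k) := rotate _ _ base
  have hadd_h : P (h + k) h := by
    have hrot := rotate _ _ hk_add
    rwa [add_comm k, add_assoc, ZModModule.add_self, add_zero] at hrot
  rcases klein_four_cases hh hk hhk l with rfl | rfl | rfl | rfl <;>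
    rcases klein_four_cases hh hk hhk m with rfl | rfl | rfl | rfl <;>
    first
    | contradiction
    | assumption
    | exact swap _ _ ‹_›

theorem sum_klein_four {M : Type*} [AddCommMonoid M] (f : K4 → M) {h k : K4} (hh : h ≠ 0)
    (hk : k ≠ 0) (hhk : h ≠ k) : ∑ l, f l = f 0 + f h + f k + f (h + k) := by
  have huniv : (Finset.univ : Finset K4) = {0, h, k, h + k} := by
    revert h k
    decide
  rw [huniv, Finset.sum_insert (by simp [*, eq_comm, add_ne_zero_of_ne]),
    Finset.sum_insert (by simp [*]), Finset.sum_pair (by simpa [eq_comm]),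
    add_assoc, add_assoc]

theorem exists_ne_zero_and_ne (h : K4) : ∃ k, k ≠ 0 ∧ k ≠ h := by
  revert h
  decide

theorem dR_K4_sq : dR K4 ^ 2 = 4 * dR K4 + 1 := by
  simpa using dR_sq K4

theorem four_lt_dR_K4 : 4 < dR K4 := by
  nlinarith [dR_K4_sq, dR_pos K4]

theorem dR_K4_eq : dR K4 = 2 + √5 := by
  have hsqrt : √5 = dR K4 - 2 :=
    (Real.sqrt_eq_iff_eq_sq (by norm_num) (by linarith [four_lt_dR_K4])).2
      (by linear_combination -dR_K4_sq)
  linarith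

theorem dC_K4_sq : dC K4 ^ 2 = 4 * dC K4 + 1 := by
  rw [dC]
  exact_mod_cast dR_K4_sq

theorem dC_K4_sub_one_ne_zero : dC K4 - 1 ≠ 0 := by
  rw [dC]
  exact_mod_cast (by linarith [four_lt_dR_K4] : dR K4 - 1 ≠ 0)

namespace PolySolution

variable {ε : K4 → K4 → ℂ} {η : K4 → ℂ} {A : K4 → K4 → K4 → ℂ}

theorem two_mul_zeroColumn_sq_add (hA : PolySolution ε η A) {g h k : K4} (hh : h ≠ 0)
    (hk : k ≠ 0) (hhk : h ≠ k) :
    2 * zeroColumn η A g k ^ 2 + 2 * Complex.normSq (A g h k) = 1 := by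
  have hsum := hA.sum_normSq g k
  rw [sum_klein_four _ hh hk hhk, if_neg hk, hA.normSq_A_zero_left, hA.normSq_A_self,
    hA.normSq_A_add_left, zero_div] at hsum
  linarith

theorem zeroColumn_sq_eq (hA : PolySolution ε η A) {g h k : K4} (hh : h ≠ 0)
    (hk : k ≠ 0) (hhk : h ≠ k) : zeroColumn η A g h ^ 2 = zeroColumn η A g k ^ 2 := by
  linarith [hA.two_mul_zeroColumn_sq_add (g := g) hh hk hhk, hA.normSq_A_symm g h k,
    hA.two_mul_zeroColumn_sq_add (g := g) hk hh hhk.symm]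

theorem zeroColumn_eq (hA : PolySolution ε η A) (g : K4) :
    zeroColumn η A g 0 = (dR K4 - 2) / (dR K4 - 1) ∧
      ∀ h ≠ 0, zeroColumn η A g h = -1 / (dR K4 - 1) := by
  have hvalues : ∀ h k : K4, h ≠ 0 → k ≠ 0 → h ≠ k →
      zeroColumn η A g 0 = (dR K4 - 2) / (dR K4 - 1) ∧
        zeroColumn η A g h = -1 / (dR K4 - 1) := by
    intro h k hh hk hhk
    have h1 := hA.sum_zeroColumn g
    have h2 := hA.sum_zeroColumn_sq g
    have h3 := hA.sum_zeroColumn_cube g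
    rw [sum_klein_four _ hh hk hhk] at h1 h2 h3
    exact power_sums_of_sq_eq dR_K4_sq four_lt_dR_K4 (hA.zeroColumn_sq_eq hk hh hhk.symm)
      (hA.zeroColumn_sq_eq (add_ne_zero_of_ne hhk) hh (by simpa using hk)) h1 h2 h3
  refine ⟨(hvalues aK bK (by decide) (by decide) (by decide)).1, fun h hh ↦ ?_⟩
  obtain ⟨k, hk, hhk⟩ := exists_ne_zero_and_ne h
  exact (hvalues h k hh hk hhk.symm).2

theorem eta_eq_one (hA : PolySolution ε η A) (g : K4) : η g = 1 := by
  refine hA.eta_eq_one_of_zeroColumn_ne_zero ?_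
  rw [(hA.zeroColumn_eq g).1]
  exact div_ne_zero (by linarith [four_lt_dR_K4]) (by linarith [four_lt_dR_K4])

theorem A_zero_zero (hA : PolySolution ε η A) (g : K4) :
    A g 0 0 = (dC K4 - 2) / (dC K4 - 1) := by
  rw [hA.A_zero_left_eq, hA.eta_eq_one, (hA.zeroColumn_eq g).1, dC]
  push_cast
  ring

theorem A_zero_left_of_ne (hA : PolySolution ε η A) (g : K4) {h : K4} (hh : h ≠ 0) :
    A g 0 h = -1 / (dC K4 - 1) := by
  rw [hA.A_zero_left_eq, hA.eta_eq_one, (hA.zeroColumn_eq g).2 h hh, dC]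
  push_cast
  ring

theorem A_zero_right_of_ne (hA : PolySolution ε η A) (g : K4) {h : K4} (hh : h ≠ 0) :
    A g h 0 = -1 / (dC K4 - 1) := by
  rw [hA.A_zero_right, hA.eta_eq_one, hA.A_zero_left_of_ne g hh, one_mul]

theorem A_self (hA : PolySolution ε η A) (g : K4) {h : K4} (hh : h ≠ 0) :
    A g h h = -ε h g / (dC K4 - 1) := by
  rw [hA.A_self_eq, (hA.zeroColumn_eq g).2 h hh, dC]
  push_cast
  ring

theorem normSq_A (hA : PolySolution ε η A) (g : K4) {h k : K4} (hh : h ≠ 0) (hk : k ≠ 0)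
    (hhk : h ≠ k) : Complex.normSq (A g h k) = dR K4 / (dR K4 - 1) ^ 2 := by
  have hd : dR K4 - 1 ≠ 0 := by linarith [four_lt_dR_K4]
  have hsum := hA.two_mul_zeroColumn_sq_add (g := g) hh hk hhk
  rw [(hA.zeroColumn_eq g).2 k hk] at hsum
  field_simp at hsum ⊢
  linarith [dR_K4_sq]

theorem A_ne_zero (hA : PolySolution ε η A) (g : K4) {h k : K4} (hh : h ≠ 0) (hk : k ≠ 0)
    (hhk : h ≠ k) : A g h k ≠ 0 := by
  rw [← Complex.normSq_pos, hA.normSq_A g hh hk hhk]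
  exact div_pos (dR_pos K4) (pow_pos (by linarith [four_lt_dR_K4]) 2)

theorem eps_add_right (hA : PolySolution ε η A) (l h k : K4) :
    ε l (h + k) = ε l h * ε l k := by
  by_cases hh : h = 0
  · rw [hh, zero_add, hA.eq1', one_mul]
  by_cases hk : k = 0
  · rw [hk, add_zero, hA.eq1', mul_one]
  by_cases hhk : h = k
  · rw [hhk, ZModModule.add_self, hA.eq1', hA.eps_mul_self]
  have hprod : ε l h * ε l k * ε l (h + k) = 1 := by
    have heq5 := hA.eq5 0 l h k
    rw [add_assoc, ZModModule.add_self] at heq5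
    simp only [zero_add, hA.eq1', one_mul] at heq5
    exact (mul_eq_right₀ (hA.A_ne_zero 0 hh hk hhk)).1 heq5.symm
  linear_combination ε l h * ε l k * hA.eps_mul_self l (h + k) - ε l (h + k) * hprod

theorem A_rotate (hA : PolySolution ε η A) (g h k : K4) :
    A g h k = ε k g * A g k (h + k) := by
  rw [hA.eq7a, hA.eta_eq_one, ZModModule.neg_eq_self, ZModModule.sub_eq_add]
  simp only [hA.eps_add_right]
  linear_combination ε k g * A g k (h + k) * (ε k g ^ 2 * ε k h ^ 2 * hA.eps_mul_self k k
    + ε k g ^ 2 * hA.eps_mul_self k h + hA.eps_mul_self k g)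

theorem A_zero_rotate (hA : PolySolution ε η A) (h k : K4) : A 0 h k = A 0 k (h + k) := by
  rw [hA.A_rotate, hA.eq1', one_mul]

theorem A_shift_left (hA : PolySolution ε η A) (g h k : K4) :
    A (g + h) h k = ε h k * A g h k := by
  rw [hA.eq8a g h k]
  simp only [hA.eta_eq_one, map_one, mul_one, hA.eps_add_right]
  linear_combination -A (g + h) h k * (ε h g ^ 2 * hA.eps_mul_self h k + hA.eps_mul_self h g)

theorem A_shift_right (hA : PolySolution ε η A) (g h k : K4) :
    A (g + k) h k = ε k h * A g h k := by
  rw [hA.eq6 _ k h, hA.A_shift_left, map_mul, hA.conj_eps, ← hA.eq6]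

/-- Equation (4) for column `k` of `A 0` and `A k`. -/
theorem A_zero_sq_relation (hA : PolySolution ε η A) {h k : K4} (hh : h ≠ 0) (hk : k ≠ 0)
    (hhk : h ≠ k) :
    (1 + ε k k) / (dC K4 - 1) ^ 2 + ε k h * (ε k k * A 0 h k ^ 2 + conj (A 0 h k) ^ 2) = 0 := by
  have horth := hA.eq4 0 k k
  rw [sum_klein_four _ hh hk hhk, if_neg hk.symm, if_neg hk] at horth
  have hconj : A 0 (h + k) k = conj (A 0 h k) := by rw [hA.eq6 0 k, ← hA.A_zero_rotate]
  have hshift : A k h k = ε k h * A 0 h k := by simpa using hA.A_shift_right 0 h k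
  have hshift' : A k (h + k) k = ε k h * ε k k * conj (A 0 h k) := by
    rw [← hconj, ← hA.eps_add_right]
    simpa using hA.A_shift_right 0 (h + k) k
  simp only [ZModModule.sub_eq_add, add_zero, zero_add, add_assoc h k k, ZModModule.add_self,
    hA.A_self _ hk, hA.A_zero_left_of_ne _ hk, hshift, hshift', hconj, hA.eq1', map_mul, map_div₀,
    map_neg, map_sub, map_one, conj_dC, hA.conj_eps, Complex.conj_conj] at horth
  rw [div_eq_mul_inv, ← inv_pow]
  linear_combination horth

/-- Equation (4) for column `k` of `A 0` and `A h`. -/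
theorem A_zero_conj_relation (hA : PolySolution ε η A) {h k : K4} (hh : h ≠ 0) (hk : k ≠ 0)
    (hhk : h ≠ k) :
    (1 + ε k h * ε h k) * (A 0 h k + ε k h * conj (A 0 h k)) = 0 := by
  have horth := hA.eq4 0 h k
  rw [sum_klein_four _ hh hk hhk, if_neg hh.symm, if_neg hk] at horth
  have hconj : A 0 (h + k) k = conj (A 0 h k) := by rw [hA.eq6 0 k, ← hA.A_zero_rotate]
  have hshift : A h h k = ε h k * A 0 h k := by simpa using hA.A_shift_left 0 h k
  have hshift' : A h (h + k) k = ε k h * ε h k * conj (A 0 h k) := by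
    have h1 := hA.A_shift_right (h + k) (h + k) k
    have h2 := hA.A_shift_left 0 (h + k) k
    rw [add_assoc, ZModModule.add_self, add_zero] at h1
    rw [zero_add] at h2
    rw [h1, h2, hconj, hA.eps_add_right, hA.eps_add_left]
    linear_combination ε k h * ε h k * conj (A 0 h k) * hA.eps_mul_self k k
  have hhkh : h + k + h = k := by rw [add_right_comm, ZModModule.add_self, zero_add]
  simp only [ZModModule.sub_eq_add, zero_add, add_zero, ZModModule.add_self, hhkh,
    add_comm k h, hA.A_self _ hk, hA.A_zero_left_of_ne _ hk, hshift, hshift', hconj, hA.eq1',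
    map_mul, map_div₀, map_neg, map_sub, map_one, conj_dC, hA.conj_eps,
    Complex.conj_conj] at horth
  have hd := dC_K4_sub_one_ne_zero
  field_simp at horth
  linear_combination -horth + ε h k * conj (A 0 h k) * hA.eps_mul_self k h

theorem eps_self_eq_neg_one_of_sq_real (hA : PolySolution ε η A) {h k : K4} (hh : h ≠ 0)
    (hk : k ≠ 0) (hhk : h ≠ k) (hreal : conj (A 0 h k) ^ 2 = A 0 h k ^ 2) : ε k k = -1 := by
  refine (hA.eps_pm k k).resolve_left fun hone ↦ ?_
  have hrel := hA.A_zero_sq_relation hh hk hhk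
  have hd := dC_K4_sub_one_ne_zero
  have hsq : A 0 h k ^ 2 = -ε k h / (dC K4 - 1) ^ 2 := by
    rw [hone, hreal] at hrel
    linear_combination ε k h / 2 * hrel - A 0 h k ^ 2 * hA.eps_mul_self k h
  have hnorm := congrArg Complex.normSq hsq
  have hd' : dR K4 - 1 ≠ 0 := by linarith [four_lt_dR_K4]
  rw [map_pow, hA.normSq_A 0 hh hk hhk, map_div₀, Complex.normSq_neg, hA.normSq_eps, map_pow, dC,
    ← Complex.ofReal_one, ← Complex.ofReal_sub, Complex.normSq_ofReal] at hnorm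
  field_simp at hnorm
  nlinarith [four_lt_dR_K4]

theorem sq_real_of_eps_self (hA : PolySolution ε η A) {h k : K4} (hh : h ≠ 0) (hk : k ≠ 0)
    (hhk : h ≠ k) (hQ : ε k k = -1) : conj (A 0 h k) ^ 2 = A 0 h k ^ 2 := by
  have hrel := hA.A_zero_sq_relation hh hk hhk
  rw [hQ] at hrel
  linear_combination ε k h * hrel + (A 0 h k ^ 2 - conj (A 0 h k) ^ 2) * hA.eps_mul_self k h

theorem sq_real_of_eps_comm (hA : PolySolution ε η A) {h k : K4} (hh : h ≠ 0) (hk : k ≠ 0)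
    (hhk : h ≠ k) (hcomm : ε h k = ε k h) : conj (A 0 h k) ^ 2 = A 0 h k ^ 2 := by
  have hrel := hA.A_zero_conj_relation hh hk hhk
  rw [hcomm, hA.eps_mul_self] at hrel
  linear_combination (ε k h * conj (A 0 h k) - A 0 h k) / 2 * hrel
    - conj (A 0 h k) ^ 2 * hA.eps_mul_self k h

theorem eps_antisymm (hA : PolySolution ε η A) {h k : K4} (hh : h ≠ 0) (hk : k ≠ 0)
    (hhk : h ≠ k) : ε k h = -ε h k := by
  have hne : ε h k ≠ ε k h := by
    intro hcomm
    have hreal := hA.sq_real_of_eps_comm hh hk hhk hcomm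
    have hQk := hA.eps_self_eq_neg_one_of_sq_real hh hk hhk hreal
    have hQh := hA.eps_self_eq_neg_one_of_sq_real hk hh hhk.symm
      (hA.sq_real_of_eps_comm hk hh hhk.symm hcomm.symm)
    have hQhk := hA.eps_self_eq_neg_one_of_sq_real hk (add_ne_zero_of_ne hhk) (by simpa using hh)
      (by rwa [← hA.A_zero_rotate])
    rw [hA.eps_add_left, hA.eps_add_right, hA.eps_add_right, hQh, hQk, hcomm] at hQhk
    have hprod : ε k h * ε k h = -1 := by linear_combination hQhk
    rw [hA.eps_mul_self] at hprod
    norm_num at hprod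
  rcases hA.eps_pm h k with h1 | h1 <;> rcases hA.eps_pm k h with h2 | h2 <;>
    simp_all

theorem sq_real (hA : PolySolution ε η A) {h k : K4} (hh : h ≠ 0) (hk : k ≠ 0)
    (hhk : h ≠ k) : conj (A 0 h k) ^ 2 = A 0 h k ^ 2 := by
  rcases hA.eps_pm k k with hQk | hQk
  · rcases hA.eps_pm h h with hQh | hQh
    · have hQhk : ε (h + k) (h + k) = -1 := by
        rw [hA.eps_add_left, hA.eps_add_right, hA.eps_add_right, hQh, hQk,
          hA.eps_antisymm hh hk hhk]
        linear_combination -hA.eps_mul_self h k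
      rw [hA.A_zero_rotate]
      exact hA.sq_real_of_eps_self hk (add_ne_zero_of_ne hhk) (by simpa using hh) hQhk
    · have hkh := hA.sq_real_of_eps_self hk hh hhk.symm hQh
      rw [hA.eq6 0 h k, Complex.conj_conj] at hkh
      exact hkh.symm
  · exact hA.sq_real_of_eps_self hh hk hhk hQk

theorem eps_self (hA : PolySolution ε η A) {k : K4} (hk : k ≠ 0) : ε k k = -1 := by
  obtain ⟨h, hh, hhk⟩ := exists_ne_zero_and_ne k
  exact hA.eps_self_eq_neg_one_of_sq_real hh hk hhk (hA.sq_real hh hk hhk)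

theorem A_eq_eps_mul (hA : PolySolution ε η A) (g : K4) {h k : K4} (hh : h ≠ 0) (hk : k ≠ 0)
    (hhk : h ≠ k) : A g h k = ε (h + k) g * A 0 h k := by
  have hshift := hA.A_shift_left 0 h k
  have hshift' := hA.A_shift_right 0 h k
  have hanti := hA.eps_antisymm hh hk hhk
  rw [zero_add] at hshift hshift'
  rcases klein_four_cases hh hk hhk g with rfl | rfl | rfl | rfl
  · rw [hA.eq1', one_mul]
  · rw [hshift, hA.eps_add_left, hA.eps_self hh, hanti]
    ring
  · rw [hshift', hA.eps_add_left, hA.eps_self hk, hanti]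
    ring
  · rw [hA.A_shift_right, hshift, hA.eps_self (add_ne_zero_of_ne hhk), hanti]
    linear_combination -A 0 h k * hA.eps_mul_self h k

theorem A_zero_sq_eq (hA : PolySolution ε η A) {h k l m : K4} (hh : h ≠ 0) (hk : k ≠ 0)
    (hhk : h ≠ k) (hl : l ≠ 0) (hm : m ≠ 0) (hlm : l ≠ m) : A 0 l m ^ 2 = A 0 h k ^ 2 := by
  refine (klein_four_pair_induction (P := fun l m ↦ A 0 l m ^ 2 = A 0 h k ^ 2 ∧
    conj (A 0 l m) ^ 2 = A 0 h k ^ 2) hh hk hhk ⟨rfl, hA.sq_real hh hk hhk⟩ ?_ ?_ hl hm hlm).1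
  · rintro l m ⟨hsq, hsq'⟩
    rw [hA.eq6 0 l m, Complex.conj_conj]
    exact ⟨hsq', hsq⟩
  · intro l m hlm
    rwa [← hA.A_zero_rotate]

theorem eq_of_eps_eq_of_A_zero_eq {ε' : K4 → K4 → ℂ} {η' : K4 → ℂ} {A' : K4 → K4 → K4 → ℂ}
    (hA : PolySolution ε η A) (hA' : PolySolution ε' η' A') {h k : K4} (hh : h ≠ 0) (hk : k ≠ 0)
    (hhk : h ≠ k) (heps : ε h k = ε' h k) (hzero : A 0 h k = A' 0 h k) : ε = ε' ∧ A = A' := by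
  have heps' : ε k h = ε' k h := by
    rw [hA.eps_antisymm hh hk hhk, hA'.eps_antisymm hh hk hhk, heps]
  have hε : ε = ε' := by
    funext l g
    rcases klein_four_cases hh hk hhk l with rfl | rfl | rfl | rfl <;>
      rcases klein_four_cases hh hk hhk g with rfl | rfl | rfl | rfl <;>
      simp only [hA.eq1', hA'.eq1', hA.eps_zero_left, hA'.eps_zero_left, hA.eps_add_left,
        hA'.eps_add_left, hA.eps_add_right, hA'.eps_add_right, hA.eps_self, hA'.eps_self, hh, hk,
        heps, heps', ne_eq, not_false_eq_true]
  refine ⟨hε, ?_⟩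
  have hA0 : ∀ {l m : K4}, l ≠ 0 → m ≠ 0 → l ≠ m → A 0 l m = A' 0 l m :=
    klein_four_pair_induction (P := fun l m ↦ A 0 l m = A' 0 l m) hh hk hhk hzero
      (fun l m hlm ↦ by rw [hA.eq6 0 l m, hA'.eq6 0 l m, hlm])
      (fun l m hlm ↦ by rwa [← hA.A_zero_rotate, ← hA'.A_zero_rotate])
  funext g l m
  by_cases hl : l = 0
  · by_cases hm : m = 0
    · rw [hl, hm, hA.A_zero_zero, hA'.A_zero_zero]
    · rw [hl, hA.A_zero_left_of_ne g hm, hA'.A_zero_left_of_ne g hm]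
  by_cases hm : m = 0
  · rw [hm, hA.A_zero_right_of_ne g hl, hA'.A_zero_right_of_ne g hl]
  by_cases hlm : l = m
  · rw [hlm, hA.A_self g hm, hA'.A_self g hm, hε]
  · rw [hA.A_eq_eps_mul g hl hm hlm, hA'.A_eq_eps_mul g hl hm hlm, hA0 hl hm hlm, hε]

end PolySolution

/-! ### Existence of the explicit solutions -/

/-- The automorphism of the Klein four-group permuting `a, b, c` cyclically. -/
def kleinRotate (h : K4) : K4 := (h.2, h.1 + h.2)

/-- The integral form of `epsK 1`. -/
def kleinSign (h g : K4) : ℤ := if h = 0 ∨ g = 0 ∨ g = kleinRotate h then 1 else -1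

/-- The matrices `(d - 1) • AfunK 1 z` over an arbitrary ring, with `w` in place of `star z`. -/
def kleinTable {R : Type*} [Ring R] (d z w : R) (g h k : K4) : R :=
  if h = 0 ∧ k = 0 then d - 2
  else if h = 0 ∨ k = 0 then -1
  else if h = k then ((-kleinSign h g : ℤ) : R)
  else kleinSign (h + k) g • (if k = kleinRotate h then z else w)

/-- The polynomial equations for `η = 1`, scaled so as to make sense over any commutative ring:
`T` stands for `(d - 1) • A`, where `d ^ 2 = 4 * d + 1`, so that `(d - 1) ^ 2 = 2 * d + 2` and
`(d - 1) ^ 3 = 8 * d`. Complex conjugation is eliminated by means of equation (6), which is not part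
of the structure. -/
structure ScaledPolySolution {R : Type*} [CommRing R] (e : K4 → K4 → ℤ) (T : K4 → K4 → K4 → R)
    (d : R) : Prop where
  eps_pm : ∀ h g, e h g = 1 ∨ e h g = -1
  eq1 : ∀ g h k, e (h + k) g = e h g * e k (g + h + h)
  eq1' : ∀ h, e h 0 = 1
  eq3 : ∀ g, ∑ h, T g h 0 = d - 5
  eq4 : ∀ g g' k, ∑ h, T g (h - g) k * T g' k (h - g') =
    (if g = g' then 2 * d + 2 else 0) - (if k = 0 then 2 * d - 6 else 0)
  eq5 : ∀ g h p q,
    T (g + h + h) p q = (e h g * e h (g + p) * e h (g + q) * e h (g + p + q)) • T g p q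
  eq7a : ∀ g h k,
    T g h k = (e (-k) (g + h) * e (-k) (g + k) * e (-k) (g + h + k)) • T g (-k) (h - k)
  eq7b : ∀ g h k,
    T g h k = (e (-h) (g + h) * e (-h) (g + k) * e (-h) (g + h + k)) • T g (k - h) (-h)
  eq8a : ∀ g h k, T g h k = (e h g * e h (g + k)) • T (g + h) h k
  eq8b : ∀ g h k, T g h k = (e k g * e k (g + h)) • T (g + k) h k
  eq9 : ∀ g p q x y,
    ∑ l, T g (x + y) l * T (g - p + x) (-x) (l + p) * T (g - q + x + y) (-y) (l + q) =
      (e p (g - p + x) * e (p + x) (g - p + q + y) * e q (g - q + x + y) * e (q + y) (g - q + x)) •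
        ((d - 1) * (T g (p + x) (q + x + y) * T (g - p) (q + y) (p + x + y))) -
        if x = 0 ∧ y = 0 then 8 else 0

/-- The order `ℤ[√5][z]` with `z ^ 2 = t * (2 + √5)`, a ring with decidable equality. The pair
`⟨x, y⟩` stands for `x + y * z`, and `⟨a, b⟩ : ℤ√5` for `a + b * √5`. -/
abbrev SolutionRing (t : ℤ) : Type := QuadraticAlgebra (ℤ√5) ⟨2 * t, t⟩ 0

theorem scaledPolySolution_kleinTable {t : ℤ} (ht : t = 1 ∨ t = -1) :
    ScaledPolySolution (R := SolutionRing t) kleinSign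
      (kleinTable ⟨⟨2, 1⟩, 0⟩ ⟨0, 1⟩ ⟨0, ⟨t, 0⟩⟩) ⟨⟨2, 1⟩, 0⟩ := by
  rcases ht with rfl | rfl <;> constructor <;> decide +kernel

theorem map_kleinTable {R S : Type*} [Ring R] [Ring S] (f : R →+* S) (d z w : R) (g h k : K4) :
    f (kleinTable d z w g h k) = kleinTable (f d) (f z) (f w) g h k := by
  simp only [kleinTable]
  split_ifs <;> simp [map_ofNat]

namespace ScaledPolySolution

theorem map {R S : Type*} [CommRing R] [CommRing S] {e : K4 → K4 → ℤ}
    {T : K4 → K4 → K4 → R} {d : R} (hT : ScaledPolySolution e T d) (f : R →+* S) :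
    ScaledPolySolution e (fun g h k ↦ f (T g h k)) (f d) where
  eps_pm := hT.eps_pm
  eq1 := hT.eq1
  eq1' := hT.eq1'
  eq3 g := by simp [← map_sum, hT.eq3, map_ofNat]
  eq4 g g' k := by
    simp only [← map_mul, ← map_sum, hT.eq4]
    split_ifs <;> simp [map_ofNat]
  eq5 g h p q := by rw [hT.eq5, map_zsmul]
  eq7a g h k := by rw [hT.eq7a, map_zsmul]
  eq7b g h k := by rw [hT.eq7b, map_zsmul]
  eq8a g h k := by rw [hT.eq8a, map_zsmul]
  eq8b g h k := by rw [hT.eq8b, map_zsmul]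
  eq9 g p q x y := by
    simp only [← map_mul, ← map_sum, hT.eq9, map_sub, map_zsmul]
    split_ifs <;> simp [map_ofNat]

variable {e : K4 → K4 → ℤ} {T : K4 → K4 → K4 → ℂ}

theorem eq9At (hT : ScaledPolySolution e T (dC K4)) (g p q x y : K4) :
    Eq9At (fun h g ↦ (e h g : ℂ)) (fun _ ↦ 1) (fun g h k ↦ 1 / (dC K4 - 1) * T g h k)
      g p q x y := by
  have hd := dC_ne_zero K4
  have hd1 := dC_K4_sub_one_ne_zero
  have hcube : 8 / (dC K4 - 1) ^ 3 = 1 / dC K4 := by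
    field_simp
    linear_combination -(1 + dC K4) * dC_K4_sq
  have heq9 := hT.eq9 g p q x y
  rw [zsmul_eq_mul] at heq9
  push_cast at heq9
  have hscale : ∀ u v w : ℂ, 1 / (dC K4 - 1) * u * (1 / (dC K4 - 1) * v) *
      (1 / (dC K4 - 1) * w) = 1 / (dC K4 - 1) ^ 3 * (u * v * w) := fun u v w ↦ by
    field_simp
  simp only [Eq9At, hscale, ← Finset.mul_sum, heq9, map_one, mul_sub]
  congr 1
  · field_simp
  · rw [ite_zero_mul_ite_zero, mul_ite, mul_zero, one_div_mul_eq_div, hcube]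
    simp only [mul_one, ite_div, zero_div]

theorem sum_mul_conj (hT : ScaledPolySolution e T (dC K4))
    (hconj : ∀ g h k, T g k h = conj (T g h k)) (g g' k : K4) :
    ∑ h, 1 / (dC K4 - 1) * T g (h - g) k * conj (1 / (dC K4 - 1) * T g' (h - g') k) =
      (if g = g' then 1 else 0) - (if k = 0 then 1 else 0) * conj 1 * 1 / dC K4 := by
  have hd := dC_ne_zero K4
  have hd1 := dC_K4_sub_one_ne_zero
  have hone : 1 / (dC K4 - 1) ^ 2 * (2 * dC K4 + 2) = 1 := by
    field_simp
    linear_combination -dC_K4_sq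
  have hinv : 1 / (dC K4 - 1) ^ 2 * (2 * dC K4 - 6) = 1 / dC K4 := by
    field_simp
    linear_combination dC_K4_sq
  simp only [map_mul, map_div₀, map_sub, map_one, conj_dC, ← hconj, mul_mul_mul_comm _ (T _ _ _),
    ← Finset.mul_sum, hT.eq4 g g' k, ← sq, one_div_pow, mul_sub, mul_ite, mul_zero, hone, hinv]
  simp [ite_div]

theorem polySolution (hT : ScaledPolySolution e T (dC K4))
    (hconj : ∀ g h k, T g k h = conj (T g h k)) :
    PolySolution (fun h g ↦ (e h g : ℂ)) (fun _ ↦ 1)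
      (fun g h k ↦ 1 / (dC K4 - 1) * T g h k) where
  eps_pm h g := mod_cast hT.eps_pm h g
  eq1 g h k := mod_cast hT.eq1 g h k
  eq1' h := mod_cast hT.eq1' h
  eq2 _ _ := rfl
  eq2' _ := one_pow 3
  eq3 g := by
    have hd := dC_ne_zero K4
    have hd1 := dC_K4_sub_one_ne_zero
    rw [← Finset.mul_sum, hT.eq3, map_one]
    field_simp
    linear_combination dC_K4_sq
  eq4 := hT.sum_mul_conj hconj
  eq5 g h p q := by
    rw [hT.eq5, zsmul_eq_mul]
    push_cast
    ring
  eq6 g h k := by rw [hconj, map_mul, map_div₀, map_sub, map_one, conj_dC]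
  eq7a g h k := by
    rw [hT.eq7a, zsmul_eq_mul]
    push_cast
    ring
  eq7b g h k := by
    rw [hT.eq7b, zsmul_eq_mul, map_one]
    push_cast
    ring
  eq8a g h k := by
    rw [hT.eq8a, zsmul_eq_mul, map_one]
    push_cast
    ring
  eq8b g h k := by
    rw [hT.eq8b, zsmul_eq_mul, map_one]
    push_cast
    ring
  eq9 := hT.eq9At

end ScaledPolySolution

theorem epsK_one_eq : epsK 1 = fun h g ↦ (kleinSign h g : ℂ) := by
  funext h g
  fin_cases h <;> fin_cases g <;>
    simp +decide [epsK, chiMatK, idxK, kleinSign]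

theorem AfunK_one_eq (z : ℂ) :
    AfunK 1 z = fun g h k ↦ 1 / (dC K4 - 1) * kleinTable (dC K4) z (star z) g h k := by
  funext g h k
  refine congrArg (1 / (dC K4 - 1) * ·) ?_
  fin_cases g <;> fin_cases h <;> fin_cases k <;>
    simp +decide [AmatK, idxK, kleinTable, kleinSign]

theorem exists_ringHom_solutionRing {t : ℤ} {z : ℂ} (hz : z ^ 2 = t * dC K4) :
    ∃ f : SolutionRing t →+* ℂ,
      f ⟨⟨2, 1⟩, 0⟩ = dC K4 ∧ f ⟨0, 1⟩ = z ∧ f ⟨0, ⟨t, 0⟩⟩ = t * z := by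
  have hsqrt : (dC K4 - 2) * (dC K4 - 2) = ((5 : ℤ) : ℂ) := by
    push_cast
    linear_combination dC_K4_sq
  let _ : Algebra (ℤ√5) ℂ := (Zsqrtd.lift ⟨dC K4 - 2, hsqrt⟩).toAlgebra
  have hmap : ∀ a b : ℤ, algebraMap (ℤ√5) ℂ ⟨a, b⟩ = a + b * (dC K4 - 2) := fun a b ↦ by
    simp [RingHom.algebraMap_toAlgebra]
  have hroot : z * z = (⟨2 * t, t⟩ : ℤ√5) • (1 : ℂ) + (0 : ℤ√5) • z := by
    rw [Algebra.smul_def, hmap, zero_smul]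
    push_cast
    linear_combination hz
  refine ⟨(QuadraticAlgebra.lift ⟨z, hroot⟩ : SolutionRing t →ₐ[ℤ√5] ℂ).toRingHom, ?_, ?_, ?_⟩
  · simp [Algebra.smul_def, hmap]
  · simp
  · simp [Algebra.smul_def, hmap]

theorem kleinTable_swap {R : Type*} [Ring R] (d z w : R) (g h k : K4) :
    kleinTable d z w g k h = kleinTable d w z g h k := by
  have hrotate : ∀ h k : K4, h ≠ 0 → k ≠ 0 → h ≠ k →
      (h = kleinRotate k ↔ ¬ k = kleinRotate h) := by decide
  by_cases hh : h = 0
  · simp [kleinTable, hh, and_comm]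
  by_cases hk : k = 0
  · simp [kleinTable, hk, and_comm]
  rcases eq_or_ne h k with rfl | hhk
  · simp [kleinTable, hh]
  simp [kleinTable, hh, hk, hhk, hhk.symm, add_comm k h, hrotate h k hh hk hhk, ite_not]

theorem conj_eq_of_sq_eq {t : ℤ} (ht : t = 1 ∨ t = -1) {z : ℂ} (hz : z ^ 2 = t * dC K4) :
    conj z = t * z := by
  have ht2 : (t : ℂ) * t = 1 := by rcases ht with rfl | rfl <;> norm_num
  have hsq : conj z ^ 2 = z ^ 2 := by rw [← map_pow, hz, map_mul, map_intCast, conj_dC]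
  have hne : conj z ≠ -(t * z) := by
    intro hneg
    have hnorm : (Complex.normSq z : ℂ) = -dC K4 := by
      rw [← Complex.mul_conj, hneg]
      linear_combination -t * hz - dC K4 * ht2
    have hnorm' : Complex.normSq z = -dR K4 := by
      rw [dC] at hnorm
      exact_mod_cast hnorm
    linarith [Complex.normSq_nonneg z, dR_pos K4]
  have hfactor : (conj z - t * z) * (conj z + t * z) = 0 := by
    linear_combination hsq - z ^ 2 * ht2
  exact sub_eq_zero.1 ((mul_eq_zero.1 hfactor).resolve_right
    fun h ↦ hne (eq_neg_of_add_eq_zero_left h))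

theorem polySolution_epsK_one {t : ℤ} (ht : t = 1 ∨ t = -1) {z : ℂ} (hz : z ^ 2 = t * dC K4) :
    PolySolution (epsK 1) (fun _ ↦ 1) (AfunK 1 z) := by
  obtain ⟨f, hfd, hfz, hfw⟩ := exists_ringHom_solutionRing hz
  have htable := (scaledPolySolution_kleinTable ht).map f
  simp only [map_kleinTable, hfd, hfz, hfw, ← conj_eq_of_sq_eq ht hz] at htable
  rw [epsK_one_eq, AfunK_one_eq]
  refine htable.polySolution fun g h k ↦ ?_
  rw [map_kleinTable, conj_dC, Complex.conj_conj, kleinTable_swap]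

theorem PolyEqs1to8.comp_addEquiv {G : Type} [AddCommGroup G] [Fintype G] [DecidableEq G]
    {ε : G → G → ℂ} {η : G → ℂ} {A : G → G → G → ℂ} (hA : PolyEqs1to8 ε η A) (θ : G ≃+ G) :
    PolyEqs1to8 (fun h g ↦ ε (θ h) (θ g)) (fun g ↦ η (θ g))
      (fun g h k ↦ A (θ g) (θ h) (θ k)) where
  eps_pm h g := hA.eps_pm _ _
  eq1 g h k := by simpa only [map_add] using hA.eq1 (θ g) (θ h) (θ k)
  eq1' h := by simpa only [map_zero] using hA.eq1' (θ h)
  eq2 g h := by simpa only [map_add] using hA.eq2 (θ g) (θ h)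
  eq2' g := hA.eq2' _
  eq3 g := by
    rw [map_zero, ← hA.eq3]
    exact θ.toEquiv.sum_comp fun h ↦ A (θ g) h 0
  eq4 g g' k := by
    have heq4 := hA.eq4 (θ g) (θ g') (θ k)
    simp only [θ.injective.eq_iff, map_eq_zero_iff θ θ.injective] at heq4
    simp only [map_sub, ← heq4]
    exact θ.toEquiv.sum_comp fun h ↦ A (θ g) (h - θ g) (θ k) * conj (A (θ g') (h - θ g') (θ k))
  eq5 g h p q := by simpa only [map_add] using hA.eq5 (θ g) (θ h) (θ p) (θ q)
  eq6 g h k := hA.eq6 _ _ _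
  eq7a g h k := by
    simpa only [map_add, map_neg, map_sub] using hA.eq7a (θ g) (θ h) (θ k)
  eq7b g h k := by
    simpa only [map_add, map_neg, map_sub] using hA.eq7b (θ g) (θ h) (θ k)
  eq8a g h k := by simpa only [map_add] using hA.eq8a (θ g) (θ h) (θ k)
  eq8b g h k := by simpa only [map_add] using hA.eq8b (θ g) (θ h) (θ k)

theorem PolySolution.comp_addEquiv {G : Type} [AddCommGroup G] [Fintype G] [DecidableEq G]
    {ε : G → G → ℂ} {η : G → ℂ} {A : G → G → G → ℂ} (hA : PolySolution ε η A) (θ : G ≃+ G) :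
    PolySolution (fun h g ↦ ε (θ h) (θ g)) (fun g ↦ η (θ g))
      (fun g h k ↦ A (θ g) (θ h) (θ k)) where
  toPolyEqs1to8 := hA.toPolyEqs1to8.comp_addEquiv θ
  eq9 g p q x y := by
    have heq9 := hA.eq9 (θ g) (θ p) (θ q) (θ x) (θ y)
    simp only [Eq9At, map_eq_zero_iff θ θ.injective] at heq9
    simp only [Eq9At, map_add, map_sub, map_neg, ← heq9]
    exact θ.toEquiv.sum_comp fun l ↦ A (θ g) (θ x + θ y) l *
      A (θ g - θ p + θ x) (-θ x) (l + θ p) * A (θ g - θ q + θ x + θ y) (-θ y) (l + θ q)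

theorem epsK_prodComm (s : ℂ) (h g : K4) :
    epsK s (AddEquiv.prodComm h) (AddEquiv.prodComm g) = epsK (-s) h g := by
  fin_cases h <;> fin_cases g <;> simp +decide [epsK, chiMatK, idxK]

theorem AfunK_prodComm {s : ℂ} (z : ℂ) (g h k : K4) :
    AfunK s z (AddEquiv.prodComm g) (AddEquiv.prodComm h) (AddEquiv.prodComm k) =
      AfunK (-s) (star z) g h k := by
  refine congrArg (1 / (dC K4 - 1) * ·) ?_
  fin_cases g <;> fin_cases h <;> fin_cases k <;> simp +decide [AmatK, idxK]

theorem polySolution_epsK_AfunK {s z : ℂ} (hs : s = 1 ∨ s = -1)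
    (hz : z ^ 2 = dC K4 ∨ z ^ 2 = -dC K4) : PolySolution (epsK s) (fun _ ↦ 1) (AfunK s z) := by
  have hone : ∀ w : ℂ, w ^ 2 = dC K4 ∨ w ^ 2 = -dC K4 →
      PolySolution (epsK 1) (fun _ ↦ 1) (AfunK 1 w) := by
    rintro w (hw | hw)
    · exact polySolution_epsK_one (t := 1) (.inl rfl) (by simpa using hw)
    · exact polySolution_epsK_one (t := -1) (.inr rfl) (by simpa using hw)
  rcases hs with rfl | rfl
  · exact hone z hz
  · have hstar : conj z ^ 2 = dC K4 ∨ conj z ^ 2 = -dC K4 :=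
      hz.imp (fun h ↦ by rw [← map_pow, h, conj_dC])
        fun h ↦ by rw [← map_pow, h, map_neg, conj_dC]
    have hswap := (hone _ hstar).comp_addEquiv AddEquiv.prodComm
    simpa only [epsK_prodComm, AfunK_prodComm, starRingEnd_apply, star_star] using hswap

theorem PolySolution.sq_eq_dC_or_neg {ε : K4 → K4 → ℂ} {η : K4 → ℂ} {A : K4 → K4 → K4 → ℂ}
    (hA : PolySolution ε η A) {h k : K4} (hh : h ≠ 0) (hk : k ≠ 0) (hhk : h ≠ k) :
    ((dC K4 - 1) * A 0 h k) ^ 2 = dC K4 ∨ ((dC K4 - 1) * A 0 h k) ^ 2 = -dC K4 := by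
  rw [← sq_eq_sq_iff_eq_or_eq_neg]
  have hd := dC_K4_sub_one_ne_zero
  have hnorm : A 0 h k * conj (A 0 h k) = dC K4 / (dC K4 - 1) ^ 2 := by
    rw [Complex.mul_conj, hA.normSq_A 0 hh hk hhk, dC]
    push_cast
    rfl
  calc (((dC K4 - 1) * A 0 h k) ^ 2) ^ 2
      = (dC K4 - 1) ^ 4 * (A 0 h k * conj (A 0 h k)) ^ 2 := by
        rw [mul_pow _ (conj _), hA.sq_real hh hk hhk]
        ring
    _ = dC K4 ^ 2 := by
        rw [hnorm]
        field_simp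

theorem AfunK_zero_aK_bK (s z : ℂ) : AfunK s z 0 aK bK = 1 / (dC K4 - 1) * z :=
  rfl

theorem polySolution_K4_iff {ε : K4 → K4 → ℂ} {η : K4 → ℂ} {A : K4 → K4 → K4 → ℂ} :
    PolySolution ε η A ↔ ∃ s z : ℂ, (s = 1 ∨ s = -1) ∧ (z ^ 2 = dC K4 ∨ z ^ 2 = -dC K4) ∧
      (∀ g, η g = 1) ∧ ε = epsK s ∧ A = AfunK s z := by
  constructor
  · intro hA
    have ha : aK ≠ 0 := by decide
    have hb : bK ≠ 0 := by decide
    have hab : aK ≠ bK := by decide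
    have hs := hA.eps_pm aK bK
    have hz := hA.sq_eq_dC_or_neg ha hb hab
    have hd := dC_K4_sub_one_ne_zero
    refine ⟨_, _, hs, hz, hA.eta_eq_one,
      hA.eq_of_eps_eq_of_A_zero_eq (polySolution_epsK_AfunK hs hz) ha hb hab ?_ ?_⟩
    · simp +decide [epsK, chiMatK, idxK]
    · rw [AfunK_zero_aK_bK]
      field_simp
  · rintro ⟨s, z, hs, hz, hη, rfl, rfl⟩
    obtain rfl : η = fun _ ↦ 1 := funext hη
    exact polySolution_epsK_AfunK hs hz

/-! ### Orbits -/

/-- The gauge transformation supported at the third nonzero element `c = a + b`. -/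
def gaugeSign (g : K4) : ℂ := if g = aK + bK then -1 else 1

theorem equivSol_neg (s z : ℂ) :
    EquivSol (epsK s) (fun _ ↦ 1) (AfunK s z) (epsK s) (fun _ ↦ 1) (AfunK s (-z)) := by
  refine ⟨gaugeSign, AddEquiv.refl K4, by simp +decide [gaugeSign], fun g ↦ ?_, fun h g ↦ ?_,
    fun _ ↦ rfl, fun g h k ↦ ?_⟩
  · simp only [gaugeSign]
    split_ifs <;> simp
  · rw [add_assoc, ZModModule.add_self, add_zero]
    simp only [gaugeSign]
    split_ifs <;> simp
  · fin_cases g <;> fin_cases h <;> fin_cases k <;>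
      simp +decide [AfunK, AmatK, idxK, gaugeSign]

theorem equivSol_prodComm (s z : ℂ) :
    EquivSol (epsK s) (fun _ ↦ 1) (AfunK s z) (epsK (-s)) (fun _ ↦ 1) (AfunK (-s) (star z)) :=
  ⟨fun _ ↦ 1, AddEquiv.prodComm, rfl, fun _ ↦ .inl rfl,
    fun h g ↦ by rw [epsK_prodComm, mul_one, one_mul], fun _ ↦ rfl,
    fun g h k ↦ by simp only [AfunK_prodComm, one_mul]⟩

namespace EquivSol

section General

variable {G : Type} [AddCommGroup G] [Fintype G] [DecidableEq G]
  {ε ε' ε'' : G → G → ℂ} {η η' η'' : G → ℂ} {A A' A'' : G → G → G → ℂ}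

theorem refl : EquivSol ε η A ε η A :=
  ⟨fun _ ↦ 1, AddEquiv.refl G, rfl, fun _ ↦ .inl rfl, by simp, fun _ ↦ rfl, by simp⟩

theorem trans (h : EquivSol ε η A ε' η' A') (h' : EquivSol ε' η' A' ε'' η'' A'') :
    EquivSol ε η A ε'' η'' A'' := by
  obtain ⟨δ, θ, hδ0, hδ, hε, hη, hA⟩ := h
  obtain ⟨δ', θ', hδ0', hδ', hε', hη', hA'⟩ := h'
  refine ⟨fun g ↦ δ' g * δ (θ' g), θ'.trans θ, ?_, fun g ↦ ?_, fun h g ↦ ?_, fun g ↦ ?_,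
    fun g h k ↦ ?_⟩
  · simp only [hδ0', map_zero, hδ0, mul_one]
  · rcases hδ' g with h1 | h1 <;> rcases hδ (θ' g) with h2 | h2 <;> simp [h1, h2]
  · simp only [hε', hε, map_add, AddEquiv.trans_apply]
    ring
  · rw [hη', hη, AddEquiv.trans_apply]
  · simp only [hA', hA, map_add, AddEquiv.trans_apply]
    ring

end General

variable {s z s' z' : ℂ}

theorem sq_eq (hs : s = 1 ∨ s = -1) (hz : z ^ 2 = dC K4 ∨ z ^ 2 = -dC K4)
    (hequiv : EquivSol (epsK s) (fun _ ↦ 1) (AfunK s z) (epsK s') (fun _ ↦ 1) (AfunK s' z')) :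
    z' ^ 2 = z ^ 2 := by
  obtain ⟨δ, θ, -, hδ, -, -, hA⟩ := hequiv
  have hδ_sq : ∀ g, δ g ^ 2 = 1 := fun g ↦ sq_eq_one_iff.2 (hδ g)
  have ha : aK ≠ 0 := by decide
  have hb : bK ≠ 0 := by decide
  have hab : aK ≠ bK := by decide
  have hθ := (polySolution_epsK_AfunK hs hz).A_zero_sq_eq ha hb hab
    ((map_ne_zero_iff θ θ.injective).2 ha) ((map_ne_zero_iff θ θ.injective).2 hb)
    (θ.injective.ne hab)
  have hsq : AfunK s' z' 0 aK bK ^ 2 = AfunK s z 0 aK bK ^ 2 := by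
    rw [hA, map_zero]
    simp only [mul_pow, hδ_sq, one_mul, hθ]
  simp only [AfunK_zero_aK_bK, mul_pow] at hsq
  exact mul_left_cancel₀ (pow_ne_zero 2 (one_div_ne_zero dC_K4_sub_one_ne_zero)) hsq

theorem of_sq_eq (hzz' : z' ^ 2 = z ^ 2) :
    EquivSol (epsK s) (fun _ ↦ 1) (AfunK s z) (epsK s) (fun _ ↦ 1) (AfunK s z') := by
  rcases sq_eq_sq_iff_eq_or_eq_neg.1 hzz' with rfl | rfl
  · exact refl
  · exact equivSol_neg s z

end EquivSol

theorem star_sq_of_sq_eq {z : ℂ} (hz : z ^ 2 = dC K4 ∨ z ^ 2 = -dC K4) : star z ^ 2 = z ^ 2 := by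
  rw [← starRingEnd_apply, ← map_pow]
  rcases hz with hz | hz <;> simp [hz, conj_dC]

theorem equivSol_iff_sq_eq {s z s' z' : ℂ} (hs : s = 1 ∨ s = -1) (hs' : s' = 1 ∨ s' = -1)
    (hz : z ^ 2 = dC K4 ∨ z ^ 2 = -dC K4) :
    EquivSol (epsK s) (fun _ ↦ 1) (AfunK s z) (epsK s') (fun _ ↦ 1) (AfunK s' z') ↔
      z' ^ 2 = z ^ 2 := by
  refine ⟨EquivSol.sq_eq hs hz, fun hzz' ↦ ?_⟩
  have hss' : s' = s ∨ s' = -s := by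
    rcases hs with rfl | rfl <;> simpa [or_comm] using hs'
  rcases hss' with rfl | rfl
  · exact EquivSol.of_sq_eq hzz'
  · exact (equivSol_prodComm s z).trans
      (EquivSol.of_sq_eq (hzz'.trans (star_sq_of_sq_eq hz).symm))

theorem ofReal_sqrt_dR_sq : ((√(dR K4) : ℝ) : ℂ) ^ 2 = dC K4 := by
  rw [← Complex.ofReal_pow, Real.sq_sqrt (dR_pos K4).le, dC]

theorem sq_eq_dC_iff {z : ℂ} :
    z ^ 2 = dC K4 ↔ z = ((√(dR K4) : ℝ) : ℂ) ∨ z = -((√(dR K4) : ℝ) : ℂ) := by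
  rw [← ofReal_sqrt_dR_sq, sq_eq_sq_iff_eq_or_eq_neg]

theorem sq_eq_neg_dC_iff {z : ℂ} : z ^ 2 = -dC K4 ↔
    z = Complex.I * ((√(dR K4) : ℝ) : ℂ) ∨ z = -(Complex.I * ((√(dR K4) : ℝ) : ℂ)) := by
  rw [← sq_eq_sq_iff_eq_or_eq_neg, mul_pow, ofReal_sqrt_dR_sq, Complex.I_sq, neg_one_mul]

theorem sq_eq_dC_or_neg_iff {z : ℂ} : z ^ 2 = dC K4 ∨ z ^ 2 = -dC K4 ↔
    z = ((√(dR K4) : ℝ) : ℂ) ∨ z = -((√(dR K4) : ℝ) : ℂ) ∨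
      z = Complex.I * ((√(dR K4) : ℝ) : ℂ) ∨ z = -(Complex.I * ((√(dR K4) : ℝ) : ℂ)) := by
  rw [sq_eq_dC_iff, sq_eq_neg_dC_iff, or_assoc]

theorem sq_eq_sq_iff_of_sq_eq_dC_or_neg {z z' : ℂ} (hz : z ^ 2 = dC K4 ∨ z ^ 2 = -dC K4) :
    z' ^ 2 = z ^ 2 ↔
      z ^ 2 = dC K4 ∧ z' ^ 2 = dC K4 ∨ z ^ 2 = -dC K4 ∧ z' ^ 2 = -dC K4 := by
  have hd : dC K4 ≠ -dC K4 := fun h ↦ dC_ne_zero K4 (self_eq_neg.1 h)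
  rcases hz with hz | hz <;> simp [hz, hd, hd.symm]

/-- Classification of solutions of the polynomial equations for the Klein four-group
`G = ℤ/2 × ℤ/2` (where `d = 2+√5`): the solutions are exactly the explicit families
parametrized by `s ∈ {1,−1}` and `z ∈ {√d, −√d, i√d, −i√d}`, and under gauge
transformations and automorphisms of `G` they form exactly two orbits, according to
whether `z` is real or purely imaginary. -/
theorem polySolution_klein_four_classification :
    dR K4 = 2 + Real.sqrt 5 ∧
    (∀ (ε : K4 → K4 → ℂ) (η : K4 → ℂ) (A : K4 → K4 → K4 → ℂ),
      PolySolution ε η A ↔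
        ∃ s z : ℂ, (s = 1 ∨ s = -1) ∧
          (z = ((Real.sqrt (dR K4) : ℝ) : ℂ) ∨ z = -((Real.sqrt (dR K4) : ℝ) : ℂ) ∨
            z = Complex.I * ((Real.sqrt (dR K4) : ℝ) : ℂ) ∨
            z = -(Complex.I * ((Real.sqrt (dR K4) : ℝ) : ℂ))) ∧
          (∀ g : K4, η g = 1) ∧ ε = epsK s ∧ A = AfunK s z) ∧
    (∀ s z s' z' : ℂ, (s = 1 ∨ s = -1) → (s' = 1 ∨ s' = -1) →
      (z = ((Real.sqrt (dR K4) : ℝ) : ℂ) ∨ z = -((Real.sqrt (dR K4) : ℝ) : ℂ) ∨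
        z = Complex.I * ((Real.sqrt (dR K4) : ℝ) : ℂ) ∨
        z = -(Complex.I * ((Real.sqrt (dR K4) : ℝ) : ℂ))) →
      (z' = ((Real.sqrt (dR K4) : ℝ) : ℂ) ∨ z' = -((Real.sqrt (dR K4) : ℝ) : ℂ) ∨
        z' = Complex.I * ((Real.sqrt (dR K4) : ℝ) : ℂ) ∨
        z' = -(Complex.I * ((Real.sqrt (dR K4) : ℝ) : ℂ))) →
      (EquivSol (epsK s) (fun _ => (1 : ℂ)) (AfunK s z)
          (epsK s') (fun _ => (1 : ℂ)) (AfunK s' z') ↔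
        (((z = ((Real.sqrt (dR K4) : ℝ) : ℂ) ∨ z = -((Real.sqrt (dR K4) : ℝ) : ℂ)) ∧
            (z' = ((Real.sqrt (dR K4) : ℝ) : ℂ) ∨ z' = -((Real.sqrt (dR K4) : ℝ) : ℂ))) ∨
          ((z = Complex.I * ((Real.sqrt (dR K4) : ℝ) : ℂ) ∨
              z = -(Complex.I * ((Real.sqrt (dR K4) : ℝ) : ℂ))) ∧
            (z' = Complex.I * ((Real.sqrt (dR K4) : ℝ) : ℂ) ∨
              z' = -(Complex.I * ((Real.sqrt (dR K4) : ℝ) : ℂ))))))) := by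
  simp only [← sq_eq_dC_or_neg_iff]
  refine ⟨dR_K4_eq, fun ε η A ↦ polySolution_K4_iff, fun s z s' z' hs hs' hz _ ↦ ?_⟩
  rw [equivSol_iff_sq_eq hs hs' hz, sq_eq_sq_iff_of_sq_eq_dC_or_neg hz]
  simp only [sq_eq_dC_iff, sq_eq_neg_dC_iff]
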